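/- Every closed subset F of the Cantor space is σ-homogeneous; that is, F is a countable union of subspaces that are closed in F and h-homogeneous in the subspace topology. -/

import Mathlib

/-- A topological space is *h-homogeneous* if every nonempty clopen subset,
with the subspace topology, is homeomorphic to the whole space. -/
def HHomogeneous (Y : Type*) [TopologicalSpace Y] : Prop :=
  ∀ U : Set Y, IsClopen U → U.Nonempty → Nonempty (U ≃ₜ Y)

/-!
By the Cantor–Bendixson theorem a compact set is the union of a perfect set and countably many
points, and a point is trivially h-homogeneous. A nonempty clopen subset of a compact perfect set
is again compact and perfect, so the perfect part is h-homogeneous by Brouwer's theorem: all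
nonempty perfect zero-dimensional compact metrizable spaces are homeomorphic to the Cantor space.

For Brouwer's theorem, code the points of such a space by binary sequences, recording membership
in each clopen set. Bits which are forced by the preceding ones carry no information, and deleting
them turns the code into a homeomorphism onto the Cantor space.
-/

open Filter Function Set Topology
open PiNat (cylinder firstDiff)

section Nth

variable {p q : ℕ → Prop}

theorem nth_count_eq_of_forall_le_iff [DecidablePred p] {n : ℕ} (hn : p n)
    (hpq : ∀ m ≤ n, p m ↔ q m) : Nat.nth q (Nat.count p n) = n := by
  classical
  have hcount : Nat.count p n = Nat.count q n := by
    simp only [Nat.count_eq_card_filter_range]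
    exact congrArg Finset.card
      (Finset.filter_congr fun m hm => hpq m (Finset.mem_range.1 hm).le)
  rw [hcount, Nat.nth_count ((hpq n le_rfl).1 hn)]

theorem nth_eq_nth_of_forall_le_iff {k : ℕ} (hp : {n | p n}.Infinite)
    (hpq : ∀ m ≤ Nat.nth p k, p m ↔ q m) : Nat.nth q k = Nat.nth p k := by
  classical
  simpa only [Nat.count_nth_of_infinite hp] using
    nth_count_eq_of_forall_le_iff (Nat.nth_mem_of_infinite hp k) hpq

end Nth

section BranchLevels

variable {X : Type*} {e : X → ℕ → Bool} {x y : X} {n k : ℕ}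

/-- `n` is a *branching level* of the code `e : X → ℕ → Bool` at `x` if the first `n` bits of `e x`
do not force the next one: both values occur among the codes agreeing with `e x` below `n`. -/
def IsBranchLevel (e : X → ℕ → Bool) (x : X) (n : ℕ) : Prop :=
  ∀ b, ∃ y, e y ∈ cylinder (e x) n ∧ e y n = b

/-- The code obtained from `e x` by deleting the bits that are forced by the preceding ones. When
`x` has only finitely many branching levels, the junk value `0` of `Nat.nth` fills the tail. -/
noncomputable def branchBits (e : X → ℕ → Bool) (x : X) (k : ℕ) : Bool :=
  e x (Nat.nth (IsBranchLevel e x) k)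

theorem isBranchLevel_congr (h : e y ∈ cylinder (e x) n) :
    IsBranchLevel e x n ↔ IsBranchLevel e y n := by
  simp only [IsBranchLevel, PiNat.mem_cylinder_iff_eq.1 h]

theorem isBranchLevel_congr_of_le (h : e y ∈ cylinder (e x) n) :
    ∀ m ≤ n, IsBranchLevel e x m ↔ IsBranchLevel e y m :=
  fun _ hm => isBranchLevel_congr (PiNat.cylinder_anti _ hm h)

theorem isBranchLevel_firstDiff (h : e y ≠ e x) :
    IsBranchLevel e x (firstDiff (e y) (e x)) := by
  intro b
  rcases eq_or_ne b (e x (firstDiff (e y) (e x))) with hb | hb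
  · exact ⟨x, PiNat.self_mem_cylinder _ _, hb.symm⟩
  · exact ⟨y, PiNat.mem_cylinder_firstDiff _ _,
      (Bool.eq_not.2 (PiNat.apply_firstDiff_ne h)).trans (Bool.eq_not.2 hb).symm⟩

theorem nth_isBranchLevel_eq (hx : {n | IsBranchLevel e x n}.Infinite)
    (h : e y ∈ cylinder (e x) (Nat.nth (IsBranchLevel e x) k)) :
    Nat.nth (IsBranchLevel e y) k = Nat.nth (IsBranchLevel e x) k :=
  nth_eq_nth_of_forall_le_iff hx (isBranchLevel_congr_of_le h)

theorem branchBits_injective (he : Injective e) : Injective (branchBits e) := by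
  classical
  intro x y hxy
  by_contra hne
  have hcode : e y ≠ e x := (he.ne hne).symm
  set n := firstDiff (e y) (e x)
  have hn : IsBranchLevel e x n := isBranchLevel_firstDiff hcode
  have hy : e y ∈ cylinder (e x) n := PiNat.mem_cylinder_firstDiff _ _
  have hbit := congrFun hxy (Nat.count (IsBranchLevel e x) n)
  rw [branchBits, branchBits, Nat.nth_count hn,
    nth_count_eq_of_forall_le_iff hn (isBranchLevel_congr_of_le hy)] at hbit
  exact PiNat.apply_firstDiff_ne hcode hbit.symm

theorem exists_branchBits_mem_cylinder [Nonempty X]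
    (he : ∀ x, {n | IsBranchLevel e x n}.Infinite) (z : ℕ → Bool) (k : ℕ) :
    ∃ x, branchBits e x ∈ cylinder z k := by
  induction k with
  | zero => simp
  | succ k ih =>
    obtain ⟨x, hx⟩ := ih
    obtain ⟨y, hyx, hyk⟩ := Nat.nth_mem_of_infinite (he x) k (z k)
    have hnth : ∀ j ≤ k, Nat.nth (IsBranchLevel e y) j = Nat.nth (IsBranchLevel e x) j :=
      fun j hj => nth_isBranchLevel_eq (he x)
        (PiNat.cylinder_anti _ ((Nat.nth_strictMono (he x)).monotone hj) hyx)
    refine ⟨y, fun j hj => ?_⟩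
    rw [branchBits, hnth j (Nat.le_of_lt_succ hj)]
    rcases Nat.lt_succ_iff_lt_or_eq.1 hj with hjk | rfl
    · rw [hyx _ (Nat.nth_strictMono (he x) hjk)]
      exact hx j hjk
    · exact hyk

theorem denseRange_branchBits [Nonempty X] (he : ∀ x, {n | IsBranchLevel e x n}.Infinite) :
    DenseRange (branchBits e) := by
  refine (PiNat.isTopologicalBasis_cylinders fun _ => Bool).dense_iff.2 ?_
  rintro _ ⟨z, k, rfl⟩ -
  obtain ⟨x, hx⟩ := exists_branchBits_mem_cylinder he z k
  exact ⟨branchBits e x, hx, mem_range_self x⟩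

variable [TopologicalSpace X]

theorem eventually_mem_cylinder (he : Continuous e) (x : X) (n : ℕ) :
    ∀ᶠ y in 𝓝 x, e y ∈ cylinder (e x) n :=
  he.continuousAt ((PiNat.isOpen_cylinder _ _ _).mem_nhds (PiNat.self_mem_cylinder _ _))

theorem infinite_setOf_isBranchLevel [PerfectSpace X] (hcont : Continuous e) (hinj : Injective e)
    (x : X) : {n | IsBranchLevel e x n}.Infinite := by
  refine infinite_of_forall_exists_gt fun n => ?_
  have hnear : ∀ᶠ y in 𝓝[≠] x, e y ∈ cylinder (e x) (n + 1) :=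
    (eventually_mem_cylinder hcont x (n + 1)).filter_mono nhdsWithin_le_nhds
  obtain ⟨y, hy, hyx⟩ := (hnear.and eventually_mem_nhdsWithin).exists
  have hne : e y ≠ e x := hinj.ne hyx
  exact ⟨_, isBranchLevel_firstDiff hne, (PiNat.mem_cylinder_iff_le_firstDiff hne _).1 hy⟩

theorem continuous_branchBits (hcont : Continuous e)
    (he : ∀ x, {n | IsBranchLevel e x n}.Infinite) : Continuous (branchBits e) := by
  refine continuous_pi fun k => continuous_iff_continuousAt.2 fun x => ?_
  refine continuousAt_const.congr (f := fun _ => branchBits e x k) ?_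
  filter_upwards [eventually_mem_cylinder hcont x (Nat.nth (IsBranchLevel e x) k + 1)] with y hy
  rw [branchBits, branchBits,
    nth_isBranchLevel_eq (he x) (PiNat.cylinder_anti _ (Nat.le_succ _) hy)]
  exact (hy _ (Nat.lt_succ_self _)).symm

end BranchLevels

section Brouwer

variable (X : Type*) [TopologicalSpace X] [CompactSpace X] [T2Space X] [TotallyDisconnectedSpace X]
  [SecondCountableTopology X]

theorem exists_continuous_injective_nat_bool : ∃ e : X → ℕ → Bool, Continuous e ∧ Injective e := by
  have : Countable (TopologicalSpace.Clopens X) :=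
    TopologicalSpace.Clopens.countable_iff_secondCountable.2 inferInstance
  obtain ⟨C, hC⟩ := exists_surjective_nat (TopologicalSpace.Clopens X)
  refine ⟨fun x n => (C n : Set X).boolIndicator x, continuous_pi fun n =>
    (continuous_boolIndicator_iff_isClopen _).2 (C n).isClopen, fun x y hxy => ?_⟩
  by_contra hne
  obtain ⟨U, hU, hxU, hyU⟩ := exists_isClopen_of_totally_separated hne
  obtain ⟨n, hn⟩ := hC ⟨U, hU⟩
  have hbit : U.boolIndicator x = U.boolIndicator y := by simpa [hn] using congrFun hxy n
  rw [(U.mem_iff_boolIndicator x).1 hxU, (U.notMem_iff_boolIndicator y).1 hyU] at hbit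
  exact Bool.noConfusion hbit

theorem nonempty_homeomorph_nat_bool [PerfectSpace X] [Nonempty X] :
    Nonempty (X ≃ₜ (ℕ → Bool)) := by
  obtain ⟨e, hcont, hinj⟩ := exists_continuous_injective_nat_bool X
  have hlevels := infinite_setOf_isBranchLevel hcont hinj
  have hbits : Continuous (branchBits e) := continuous_branchBits hcont hlevels
  have hsurj : Surjective (branchBits e) := range_eq_univ.1 <|
    (isCompact_range hbits).isClosed.closure_eq ▸ (denseRange_branchBits hlevels).closure_range
  exact ⟨Continuous.homeoOfEquivCompactToT2
    (f := .ofBijective (branchBits e) ⟨branchBits_injective hinj, hsurj⟩) hbits⟩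

end Brouwer

section HHomogeneous

variable {X : Type*} [TopologicalSpace X]

theorem perfectSpace_coe_iff_preperfect {C : Set X} : PerfectSpace C ↔ Preperfect C := by
  simp only [perfectSpace_iff_forall_not_isolated, nhds_ne_subtype_neBot_iff, Subtype.forall,
    Preperfect, AccPt]

theorem hHomogeneous_of_subsingleton [Subsingleton X] : HHomogeneous X := by
  intro U _ hU
  rw [Subsingleton.eq_univ_of_nonempty hU]
  exact ⟨Homeomorph.Set.univ X⟩

variable [T2Space X] [TotallyDisconnectedSpace X] [SecondCountableTopology X]

theorem hHomogeneous_of_perfectSpace [CompactSpace X] [PerfectSpace X] : HHomogeneous X := by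
  intro U hU hne
  have : Nonempty U := hne.to_subtype
  have : Nonempty X := hne.to_type
  have : CompactSpace U := isCompact_iff_compactSpace.1 hU.isClosed.isCompact
  have : PerfectSpace U := perfectSpace_coe_iff_preperfect.2 hU.isOpen.preperfect
  obtain ⟨eU⟩ := nonempty_homeomorph_nat_bool U
  obtain ⟨eX⟩ := nonempty_homeomorph_nat_bool X
  exact ⟨eU.trans eX.symm⟩

theorem exists_iUnion_hHomogeneous_of_isCompact {K : Set X} (hK : IsCompact K) :
    ∃ f : ℕ → Set X,
      (∀ i, IsClosed (f i)) ∧ (∀ i, HHomogeneous (f i)) ∧ K = ⋃ i, f i := by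
  obtain ⟨V, D, hV, hD, rfl⟩ := exists_countable_union_perfect_of_isClosed hK.isClosed
  have : CompactSpace D :=
    isCompact_iff_compactSpace.1 (hK.of_isClosed_subset hD.closed subset_union_right)
  have : PerfectSpace D := perfectSpace_coe_iff_preperfect.2 hD.acc
  have hcountable : (insert D ((fun x : X => {x}) '' V)).Countable := (hV.image _).insert D
  obtain ⟨f, hf⟩ := hcountable.exists_eq_range (insert_nonempty _ _)
  have hpieces : ∀ i, IsClosed (f i) ∧ HHomogeneous (f i) := by
    rw [← forall_mem_range (p := fun s : Set X => IsClosed s ∧ HHomogeneous s), ← hf,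
      forall_mem_insert, forall_mem_image]
    exact ⟨⟨hD.closed, hHomogeneous_of_perfectSpace⟩,
      fun _ _ => ⟨isClosed_singleton, hHomogeneous_of_subsingleton⟩⟩
  refine ⟨f, fun i => (hpieces i).1, fun i => (hpieces i).2, ?_⟩
  rw [← sUnion_range, ← hf, sUnion_insert, sUnion_image, biUnion_of_singleton, union_comm]

theorem closed_sigmaHomogeneous_general {F : Set X} (hF : IsSigmaCompact F) :
    ∃ f : ℕ → Set X,
      (∀ i, f i ⊆ F) ∧
      (∀ i, IsClosed (Subtype.val ⁻¹' f i : Set F)) ∧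
      (∀ i, HHomogeneous (f i)) ∧
      F = ⋃ i, f i := by
  obtain ⟨K, hK, rfl⟩ := hF
  choose f hclosed hhom hunion using fun n => exists_iUnion_hHomogeneous_of_isCompact (hK n)
  have hcover : ⋃ n, K n = ⋃ i : ℕ, f i.unpair.1 i.unpair.2 := by
    rw [Set.iUnion_unpair, iUnion_congr hunion]
  exact ⟨fun i => f i.unpair.1 i.unpair.2,
    fun i => hcover ▸ subset_iUnion (fun i : ℕ => f i.unpair.1 i.unpair.2) i,
    fun _ => (hclosed _ _).preimage continuous_subtype_val, fun _ => hhom _ _, hcover⟩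

end HHomogeneous

/-- Every closed subset `F` of the Cantor space `ℕ → Bool` is σ-homogeneous:
it is a countable union of subspaces that are closed in `F` and h-homogeneous
in the subspace topology. -/
theorem closed_sigmaHomogeneous (F : Set (ℕ → Bool)) (hF : IsClosed F) :
    ∃ f : ℕ → Set (ℕ → Bool),
      (∀ i, f i ⊆ F) ∧
      (∀ i, IsClosed (Subtype.val ⁻¹' f i : Set ↥F)) ∧
      (∀ i, HHomogeneous ↥(f i)) ∧
      F = ⋃ i, f i :=
  closed_sigmaHomogeneous_general hF.isCompact.isSigmaCompact
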